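/- arXiv:2002.08841 — 13 statements merged into one kernel-verified Lean document; each statement's English description precedes it below -/
import Mathlib

section
/- Let 0 ≤ b2 ≤ b1 and l ≤ b2 ≤ b1 < u be real numbers. Then the closure in ℝ² of the graph {(v, r(v; b1, b2)) : v ∈ [l, u]} equals S1 ∪ S2 ∪ S3, where S1 = {(v, y) : l ≤ v ≤ u, y = b2, v ≤ b2}, S2 = {(v, y) : l ≤ v ≤ u, y = v, b2 ≤ v ≤ b1}, and S3 = {(v, y) : l ≤ v ≤ u, y = 0, v ≥ b1}. -/
/-- The reward function `r(v; b1, b2)` of a second-price auction with reserve price `v`: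
`b2` if `v ≤ b2`, `v` if `b2 < v ≤ b1`, and `0` if `v > b1`. -/
noncomputable def reward (b1 b2 v : ℝ) : ℝ :=
  if v ≤ b2 then b2 else if v ≤ b1 then v else 0

/-- The closure of the graph of the reward function on `[l, u]` is `S1 ∪ S2 ∪ S3`. -/
theorem closure_graph_reward_eq_union (b1 b2 l u : ℝ)
    (hb2 : 0 ≤ b2) (hb : b2 ≤ b1) (hl : l ≤ b2) (hu : b1 < u) :
    closure {p : ℝ × ℝ | p.1 ∈ Set.Icc l u ∧ p.2 = reward b1 b2 p.1} =
      {p : ℝ × ℝ | l ≤ p.1 ∧ p.1 ≤ u ∧ p.2 = b2 ∧ p.1 ≤ b2} ∪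
      {p : ℝ × ℝ | l ≤ p.1 ∧ p.1 ≤ u ∧ p.2 = p.1 ∧ b2 ≤ p.1 ∧ p.1 ≤ b1} ∪
      {p : ℝ × ℝ | l ≤ p.1 ∧ p.1 ≤ u ∧ p.2 = 0 ∧ b1 ≤ p.1} := by
  apply Set.Subset.antisymm
  · apply closure_minimal
    · rintro ⟨v, y⟩ ⟨⟨hlv, hvu⟩, hy⟩
      simp only [reward] at hy
      simp only [Set.mem_union, Set.mem_ofPred_eq]
      split_ifs at hy <;> grind
    · simp only [Set.ofPred_and]
      refine ((IsClosed.inter ?_ (IsClosed.inter ?_ (IsClosed.inter ?_ ?_))).union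
        (IsClosed.inter ?_ (IsClosed.inter ?_ (IsClosed.inter ?_ (IsClosed.inter ?_ ?_))))).union
        (IsClosed.inter ?_ (IsClosed.inter ?_ (IsClosed.inter ?_ ?_)))
      all_goals
        first
        | exact isClosed_le (by fun_prop) (by fun_prop)
        | exact isClosed_eq (by fun_prop) (by fun_prop)
  · rintro ⟨v, y⟩ ((⟨hlv, hvu, hy, h⟩ | ⟨hlv, hvu, hy, h, h'⟩) | ⟨hlv, hvu, hy, h⟩) <;>
      simp only at hlv hvu hy h
    · exact subset_closure ⟨⟨hlv, hvu⟩, by simp [reward, h, hy]⟩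
    · refine subset_closure ⟨⟨hlv, hvu⟩, ?_⟩
      simp only [reward]
      split_ifs <;> grind
    · have hmem : v ∈ closure (Set.Ioc b1 u) := by
        rw [closure_Ioc hu.ne]
        exact ⟨h, hvu⟩
      have hmap : Set.MapsTo (fun t : ℝ => (t, (0 : ℝ))) (Set.Ioc b1 u)
          {p : ℝ × ℝ | p.1 ∈ Set.Icc l u ∧ p.2 = reward b1 b2 p.1} := by
        rintro t ⟨ht, htu⟩
        exact ⟨⟨by linarith, htu⟩,
          by simp [reward, not_le.2 ht, not_le.2 (hb.trans_lt ht)]⟩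
      rw [hy]
      exact hmap.closure (by fun_prop) hmem
end

section
/- Consider n samples with feature vectors w^1, …, w^n ∈ ℝ^d and bid prices 0 ≤ b2_i ≤ b1_i, and let X = [L, U]^d with L < U. Define R(β) = (1/n) ∑_{i=1}^n r(w^i · β; b1_i, b2_i), l_i = min_{β ∈ X} w^i · β, and u_i = max_{β ∈ X} w^i · β. Consider the auxiliary problem: maximize (1/n) ∑_{i=1}^n y_i over (β, v, y) with β ∈ X, v_i = w^i · β for each i, and (v_i, y_i) in the closure of the graph {(t, r(t; b1_i, b2_i)) : t ∈ [l_i, u_i]}. Then: (i) if (β, v, y) is an optimal solution of the auxiliary problem, then β maximizes R over X; and (ii) if β maximizes R over X, then there exist v and y such that (β, v, y) is an optimal solution of the auxiliary problem, and the two optimal values coincide. -/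
open Finset

/-- The feasible box `X = [L, U]^d`. -/
def box (d : ℕ) (L U : ℝ) : Set (Fin d → ℝ) := Set.Icc (fun _ => L) (fun _ => U)

/-- The average revenue `R(β) = (1/n) ∑ᵢ r(wⁱ · β; b1ᵢ, b2ᵢ)`. -/
noncomputable def avgReward (d n : ℕ) (w : Fin n → Fin d → ℝ) (b1 b2 : Fin n → ℝ)
    (β : Fin d → ℝ) : ℝ :=
  (1 / n : ℝ) * ∑ i, reward (b1 i) (b2 i) (∑ j, w i j * β j)

/-- Feasibility for the auxiliary problem: `β ∈ X`, `vᵢ = wⁱ · β`, and `(vᵢ, yᵢ)` lies in the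
closure of the graph of `r(·; b1ᵢ, b2ᵢ)` over `[lᵢ, uᵢ]`. -/
def AuxFeasible (d n : ℕ) (w : Fin n → Fin d → ℝ) (b1 b2 l u : Fin n → ℝ) (L U : ℝ)
    (β : Fin d → ℝ) (v y : Fin n → ℝ) : Prop :=
  β ∈ box d L U ∧ ∀ i, v i = (∑ j, w i j * β j) ∧
    (v i, y i) ∈
      closure {p : ℝ × ℝ | p.1 ∈ Set.Icc (l i) (u i) ∧ p.2 = reward (b1 i) (b2 i) p.1}

/-- The hypograph of the reward function, as a union of two closed sets. -/
lemma le_reward_iff {b1 b2 : ℝ} (hb2 : 0 ≤ b2) (hb : b2 ≤ b1) (t y : ℝ) :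
    y ≤ reward b1 b2 t ↔ (t ≤ b1 ∧ y ≤ max b2 t) ∨ y ≤ 0 := by
  unfold reward
  split_ifs <;> grind

/-- The reward function is upper semicontinuous: its hypograph is closed. -/
lemma isClosed_hypograph_reward {b1 b2 : ℝ} (hb2 : 0 ≤ b2) (hb : b2 ≤ b1) :
    IsClosed {p : ℝ × ℝ | p.2 ≤ reward b1 b2 p.1} := by
  simp only [le_reward_iff hb2 hb]
  exact ((isClosed_le continuous_fst continuous_const).inter
    (isClosed_le continuous_snd (continuous_const.max continuous_fst))).union
    (isClosed_le continuous_snd continuous_const)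

lemma le_reward_of_mem_closure_graph {b1 b2 : ℝ} (hb2 : 0 ≤ b2) (hb : b2 ≤ b1) {s : Set ℝ}
    {t y : ℝ} (h : (t, y) ∈ closure {p : ℝ × ℝ | p.1 ∈ s ∧ p.2 = reward b1 b2 p.1}) :
    y ≤ reward b1 b2 t :=
  closure_minimal (fun _ hp => hp.2.le) (isClosed_hypograph_reward hb2 hb) h

/-- The auxiliary problem (optimizing over the closure of the graphs of the reward functions)
is equivalent to the original reserve price optimization problem. -/
theorem aux_problem_equiv (d n : ℕ) (hn : 0 < n)
    (w : Fin n → Fin d → ℝ) (b1 b2 : Fin n → ℝ)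
    (hb2 : ∀ i, 0 ≤ b2 i) (hb : ∀ i, b2 i ≤ b1 i)
    (L U : ℝ) (hLU : L < U) (l u : Fin n → ℝ)
    (hl : ∀ i, IsLeast ((fun β => ∑ j, w i j * β j) '' box d L U) (l i))
    (hu : ∀ i, IsGreatest ((fun β => ∑ j, w i j * β j) '' box d L U) (u i)) :
    (∀ β v y,
      (AuxFeasible d n w b1 b2 l u L U β v y ∧
        ∀ β' v' y', AuxFeasible d n w b1 b2 l u L U β' v' y' →
          (1 / n : ℝ) * ∑ i, y' i ≤ (1 / n : ℝ) * ∑ i, y i) →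
      (β ∈ box d L U ∧
        ∀ β' ∈ box d L U, avgReward d n w b1 b2 β' ≤ avgReward d n w b1 b2 β))
    ∧
    (∀ β, β ∈ box d L U →
      (∀ β' ∈ box d L U, avgReward d n w b1 b2 β' ≤ avgReward d n w b1 b2 β) →
      ∃ v y,
        (AuxFeasible d n w b1 b2 l u L U β v y ∧
          ∀ β' v' y', AuxFeasible d n w b1 b2 l u L U β' v' y' →
            (1 / n : ℝ) * ∑ i, y' i ≤ (1 / n : ℝ) * ∑ i, y i) ∧
        (1 / n : ℝ) * ∑ i, y i = avgReward d n w b1 b2 β) := by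
  have upper : ∀ β v y, AuxFeasible d n w b1 b2 l u L U β v y →
      (1 / n : ℝ) * ∑ i, y i ≤ avgReward d n w b1 b2 β := by
    rintro β v y ⟨-, h⟩
    refine mul_le_mul_of_nonneg_left (Finset.sum_le_sum fun i _ => ?_) (by positivity)
    rw [← (h i).1]
    exact le_reward_of_mem_closure_graph (hb2 i) (hb i) (h i).2
  have feasible : ∀ β ∈ box d L U, AuxFeasible d n w b1 b2 l u L U β
      (fun i => ∑ j, w i j * β j) (fun i => reward (b1 i) (b2 i) (∑ j, w i j * β j)) :=
    fun β hβ => ⟨hβ, fun i => ⟨rfl, subset_closure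
      ⟨⟨(hl i).2 ⟨β, hβ, rfl⟩, (hu i).2 ⟨β, hβ, rfl⟩⟩, rfl⟩⟩⟩
  constructor
  · rintro β v y ⟨hfeas, hopt⟩
    exact ⟨hfeas.1, fun β' hβ' =>
      (hopt _ _ _ (feasible β' hβ')).trans (upper β v y hfeas)⟩
  · intro β hβ hmax
    exact ⟨_, _, ⟨feasible β hβ, fun β' v' y' h =>
      (upper β' v' y' h).trans (hmax β' h.1)⟩, rfl⟩
end

section
/- Let 0 ≤ b2 ≤ b1 and l ≤ b2 ≤ b1 ≤ u be real numbers. Then the set of pairs (v, y) ∈ ℝ² for which there exists z = (z1, z2, z3) ∈ {0, 1}³ satisfying y ≤ b2·z1 + b1·z2, y ≥ b2·(z1 + z2), y ≤ v + (b2 − l)·z1 − b1·z3, y ≥ v − u·z3, l ≤ v ≤ u, and z1 + z2 + z3 = 1, equals S1 ∪ S2 ∪ S3, where S1 = {(v, y) : l ≤ v ≤ u, y = b2, v ≤ b2}, S2 = {(v, y) : l ≤ v ≤ u, y = v, b2 ≤ v ≤ b1}, and S3 = {(v, y) : l ≤ v ≤ u, y = 0, v ≥ b1}. Moreover, exactly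 one component of any such z equals 1: z1 = 1 forces (v, y) ∈ S1, z2 = 1 forces (v, y) ∈ S2, and z3 = 1 forces (v, y) ∈ S3. -/
/-- The linear constraints of the MIP formulation for a single sample:
`y ≤ b2·z1 + b1·z2`, `y ≥ b2·(z1 + z2)`, `y ≤ v + (b2 − l)·z1 − b1·z3`, `y ≥ v − u·z3`,
`l ≤ v ≤ u`, `z1 + z2 + z3 = 1`. -/
def MipCon (b1 b2 l u v y : ℝ) (z : Fin 3 → ℝ) : Prop :=
  y ≤ b2 * z 0 + b1 * z 1 ∧ b2 * (z 0 + z 1) ≤ y ∧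
  y ≤ v + (b2 - l) * z 0 - b1 * z 2 ∧ v - u * z 2 ≤ y ∧
  l ≤ v ∧ v ≤ u ∧ z 0 + z 1 + z 2 = 1

/-- The constraints at `z = (1, 0, 0)` describe the flat piece `y = b2`. -/
lemma mipCon_iff_of_first {b1 b2 l u v y : ℝ} {z : Fin 3 → ℝ}
    (h0 : z 0 = 1) (h1 : z 1 = 0) (h2 : z 2 = 0) :
    MipCon b1 b2 l u v y z ↔ l ≤ v ∧ v ≤ u ∧ y = b2 ∧ v ≤ b2 := by
  simp only [MipCon, h0, h1, h2]
  constructor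
  · rintro ⟨_, _, _, _, _, _, _⟩
    refine ⟨?_, ?_, ?_, ?_⟩ <;> linarith
  · rintro ⟨_, _, rfl, _⟩
    refine ⟨?_, ?_, ?_, ?_, ?_, ?_, ?_⟩ <;> linarith

/-- The constraints at `z = (0, 1, 0)` describe the diagonal piece `y = v`. -/
lemma mipCon_iff_of_second {b1 b2 l u v y : ℝ} {z : Fin 3 → ℝ}
    (h0 : z 0 = 0) (h1 : z 1 = 1) (h2 : z 2 = 0) :
    MipCon b1 b2 l u v y z ↔ l ≤ v ∧ v ≤ u ∧ y = v ∧ b2 ≤ v ∧ v ≤ b1 := by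
  simp only [MipCon, h0, h1, h2]
  constructor
  · rintro ⟨_, _, _, _, _, _, _⟩
    refine ⟨?_, ?_, ?_, ?_, ?_⟩ <;> linarith
  · rintro ⟨_, _, rfl, _, _⟩
    refine ⟨?_, ?_, ?_, ?_, ?_, ?_, ?_⟩ <;> linarith

/-- The constraints at `z = (0, 0, 1)` describe the zero piece `y = 0`. -/
lemma mipCon_iff_of_third {b1 b2 l u v y : ℝ} {z : Fin 3 → ℝ}
    (h0 : z 0 = 0) (h1 : z 1 = 0) (h2 : z 2 = 1) :
    MipCon b1 b2 l u v y z ↔ l ≤ v ∧ v ≤ u ∧ y = 0 ∧ b1 ≤ v := by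
  simp only [MipCon, h0, h1, h2]
  constructor
  · rintro ⟨_, _, _, _, _, _, _⟩
    refine ⟨?_, ?_, ?_, ?_⟩ <;> linarith
  · rintro ⟨_, _, rfl, _⟩
    refine ⟨?_, ?_, ?_, ?_, ?_, ?_, ?_⟩ <;> linarith

/-- A binary vector of length three with sum one is a standard basis vector. -/
lemma binary_cases_of_sum_eq_one {z : Fin 3 → ℝ} (hz : ∀ j, z j = 0 ∨ z j = 1)
    (hsum : z 0 + z 1 + z 2 = 1) :
    (z 0 = 1 ∧ z 1 = 0 ∧ z 2 = 0) ∨ (z 0 = 0 ∧ z 1 = 1 ∧ z 2 = 0) ∨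
      (z 0 = 0 ∧ z 1 = 0 ∧ z 2 = 1) := by
  rcases hz 0 with h0 | h0 <;> rcases hz 1 with h1 | h1 <;> rcases hz 2 with h2 | h2 <;>
    norm_num [h0, h1, h2] at hsum <;> simp [h0, h1, h2]

/-- Validity of the MIP formulation: the set of `(v, y)` admitting a binary `z` satisfying the
MIP constraints equals `S1 ∪ S2 ∪ S3`; moreover exactly one component of any such `z` is one,
with `z1 = 1`, `z2 = 1`, `z3 = 1` forcing `(v, y) ∈ S1, S2, S3` respectively. -/
theorem mip_formulation_valid (b1 b2 l u : ℝ)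
    (hb2 : 0 ≤ b2) (hb : b2 ≤ b1) (hl : l ≤ b2) (hu : b1 ≤ u) :
    ({p : ℝ × ℝ | ∃ z : Fin 3 → ℝ, (∀ j, z j = 0 ∨ z j = 1) ∧ MipCon b1 b2 l u p.1 p.2 z} =
      {p : ℝ × ℝ | l ≤ p.1 ∧ p.1 ≤ u ∧ p.2 = b2 ∧ p.1 ≤ b2} ∪
      {p : ℝ × ℝ | l ≤ p.1 ∧ p.1 ≤ u ∧ p.2 = p.1 ∧ b2 ≤ p.1 ∧ p.1 ≤ b1} ∪
      {p : ℝ × ℝ | l ≤ p.1 ∧ p.1 ≤ u ∧ p.2 = 0 ∧ b1 ≤ p.1}) ∧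
    (∀ (v y : ℝ) (z : Fin 3 → ℝ), (∀ j, z j = 0 ∨ z j = 1) → MipCon b1 b2 l u v y z →
      ((∃! j, z j = 1) ∧
        (z 0 = 1 → (v, y) ∈ {p : ℝ × ℝ | l ≤ p.1 ∧ p.1 ≤ u ∧ p.2 = b2 ∧ p.1 ≤ b2}) ∧
        (z 1 = 1 →
          (v, y) ∈ {p : ℝ × ℝ | l ≤ p.1 ∧ p.1 ≤ u ∧ p.2 = p.1 ∧ b2 ≤ p.1 ∧ p.1 ≤ b1}) ∧
        (z 2 = 1 → (v, y) ∈ {p : ℝ × ℝ | l ≤ p.1 ∧ p.1 ≤ u ∧ p.2 = 0 ∧ b1 ≤ p.1}))) := by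
  constructor
  · ext ⟨v, y⟩
    simp only [Set.mem_union, Set.mem_ofPred_eq]
    constructor
    · rintro ⟨z, hz, hc⟩
      rcases binary_cases_of_sum_eq_one hz hc.2.2.2.2.2.2 with
        ⟨h0, h1, h2⟩ | ⟨h0, h1, h2⟩ | ⟨h0, h1, h2⟩
      · exact Or.inl (Or.inl ((mipCon_iff_of_first h0 h1 h2).1 hc))
      · exact Or.inl (Or.inr ((mipCon_iff_of_second h0 h1 h2).1 hc))
      · exact Or.inr ((mipCon_iff_of_third h0 h1 h2).1 hc)
    · rintro ((h | h) | h)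
      · exact ⟨![1, 0, 0], by simp [Fin.forall_fin_succ],
          (mipCon_iff_of_first rfl rfl rfl).2 h⟩
      · exact ⟨![0, 1, 0], by simp [Fin.forall_fin_succ],
          (mipCon_iff_of_second rfl rfl rfl).2 h⟩
      · exact ⟨![0, 0, 1], by simp [Fin.forall_fin_succ],
          (mipCon_iff_of_third rfl rfl rfl).2 h⟩
  · intro v y z hz hc
    rcases binary_cases_of_sum_eq_one hz hc.2.2.2.2.2.2 with
      ⟨h0, h1, h2⟩ | ⟨h0, h1, h2⟩ | ⟨h0, h1, h2⟩
    · refine ⟨⟨0, h0, ?_⟩, fun _ => (mipCon_iff_of_first h0 h1 h2).1 hc, ?_, ?_⟩ <;>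
        simp [Fin.forall_fin_succ, h1, h2]
    · refine ⟨⟨1, h1, ?_⟩, ?_, fun _ => (mipCon_iff_of_second h0 h1 h2).1 hc, ?_⟩ <;>
        simp [Fin.forall_fin_succ, h0, h2]
    · refine ⟨⟨2, h2, ?_⟩, ?_, ?_, fun _ => (mipCon_iff_of_third h0 h1 h2).1 hc⟩ <;>
        simp [Fin.forall_fin_succ, h0, h1]
end

section
/- Let 0 ≤ b2 ≤ b1 and l ≤ b2 ≤ b1 ≤ u be real numbers. Let D ⊆ ℝ² × ℝ³ be the set of (v, y, z) with z ∈ {0, 1}³ satisfying y ≤ b2·z1 + b1·z2, y ≥ b2·(z1 + z2), y ≤ v + (b2 − l)·z1 − b1·z3, y ≥ v − u·z3, l ≤ v ≤ u, and z1 + z2 + z3 = 1. Let P ⊆ ℝ² × ℝ³ be the polytope defined by the same linear inequalities together with z ∈ [0, 1]³ (dropping integrality). Then P equals the convex hull of D; that is, every extreme point of the linear programming relaxation P is integral in z, so the mixed-integer formulation is ideal. -/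
/-- The mixed-integer set `D` (binary `z`). -/
def mipSet (b1 b2 l u : ℝ) : Set (ℝ × ℝ × (Fin 3 → ℝ)) :=
  {p | (∀ j, p.2.2 j = 0 ∨ p.2.2 j = 1) ∧ MipCon b1 b2 l u p.1 p.2.1 p.2.2}

/-- The LP relaxation `P` (`z ∈ [0,1]³`). -/
def lpSet (b1 b2 l u : ℝ) : Set (ℝ × ℝ × (Fin 3 → ℝ)) :=
  {p | (∀ j, p.2.2 j ∈ Set.Icc (0 : ℝ) 1) ∧ MipCon b1 b2 l u p.1 p.2.1 p.2.2}

theorem mipSet_subset_lpSet (b1 b2 l u : ℝ) : mipSet b1 b2 l u ⊆ lpSet b1 b2 l u := by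
  rintro p ⟨hz, hc⟩
  refine ⟨fun j => ?_, hc⟩
  rcases hz j with h | h <;> simp [h]

theorem convex_lpSet (b1 b2 l u : ℝ) : Convex ℝ (lpSet b1 b2 l u) := by
  rintro ⟨v, y, z⟩ ⟨hz, h1, h2, h3, h4, h5, h6, h7⟩ ⟨v', y', z'⟩
    ⟨hz', h1', h2', h3', h4', h5', h6', h7'⟩ s t hs ht hst
  dsimp only at *
  refine ⟨fun j => convex_Icc (0 : ℝ) 1 (hz j) (hz' j) hs ht hst, ?_⟩
  have comb {a b a' b' : ℝ} (h : a ≤ b) (h' : a' ≤ b') : s * a + t * a' ≤ s * b + t * b' :=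
    add_le_add (mul_le_mul_of_nonneg_left h hs) (mul_le_mul_of_nonneg_left h' ht)
  simp only [MipCon, Prod.smul_mk, Prod.mk_add_mk, Pi.add_apply, Pi.smul_apply, smul_eq_mul]
  refine ⟨?_, ?_, ?_, ?_, ?_, ?_, ?_⟩
  · linarith [comb h1 h1']
  · linarith [comb h2 h2']
  · linarith [comb h3 h3']
  · linarith [comb h4 h4']
  · calc l = s * l + t * l := by rw [← add_mul, hst, one_mul]
      _ ≤ _ := comb h5 h5'
  · calc s * v + t * v' ≤ s * u + t * u := comb h6 h6'
      _ = u := by rw [← add_mul, hst, one_mul]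
  · linear_combination s * h7 + t * h7' + hst

theorem exists_eq_add_mul_sub_of_mem_Icc {a b x : ℝ} (hx : x ∈ Set.Icc a b) :
    ∃ t ∈ Set.Icc (0 : ℝ) 1, x = a + t * (b - a) := by
  rw [← segment_eq_Icc (hx.1.trans hx.2), segment_eq_image'] at hx
  obtain ⟨t, ht, rfl⟩ := hx
  exact ⟨t, ht, rfl⟩

theorem add_mul_sub_mem_Icc {a b t : ℝ} (hab : a ≤ b) (ht : t ∈ Set.Icc (0 : ℝ) 1) :
    a + t * (b - a) ∈ Set.Icc a b :=
  (convex_Icc a b).add_smul_sub_mem (Set.left_mem_Icc.2 hab) (Set.right_mem_Icc.2 hab) ht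

theorem mk_mem_mipSet_single_zero {b1 b2 l u v : ℝ} (hb : b2 ≤ b1) (hu : b1 ≤ u)
    (hv : v ∈ Set.Icc l b2) : (v, b2, ![1, 0, 0]) ∈ mipSet b1 b2 l u := by
  obtain ⟨h, h'⟩ := hv
  refine ⟨fun j => by fin_cases j <;> simp, ?_⟩
  simp only [MipCon, Matrix.cons_val]
  refine ⟨?_, ?_, ?_, ?_, ?_, ?_, ?_⟩ <;> linarith

theorem mk_mem_mipSet_single_one {b1 b2 l u v : ℝ} (hl : l ≤ b2) (hu : b1 ≤ u)
    (hv : v ∈ Set.Icc b2 b1) : (v, v, ![0, 1, 0]) ∈ mipSet b1 b2 l u := by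
  obtain ⟨h, h'⟩ := hv
  refine ⟨fun j => by fin_cases j <;> simp, ?_⟩
  simp only [MipCon, Matrix.cons_val]
  refine ⟨?_, ?_, ?_, ?_, ?_, ?_, ?_⟩ <;> linarith

theorem mk_mem_mipSet_single_two {b1 b2 l u v : ℝ} (hb : b2 ≤ b1) (hl : l ≤ b2)
    (hv : v ∈ Set.Icc b1 u) : (v, 0, ![0, 0, 1]) ∈ mipSet b1 b2 l u := by
  obtain ⟨h, h'⟩ := hv
  refine ⟨fun j => by fin_cases j <;> simp, ?_⟩
  simp only [MipCon, Matrix.cons_val]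
  refine ⟨?_, ?_, ?_, ?_, ?_, ?_, ?_⟩ <;> linarith

theorem lpSet_subset_convexHull_mipSet {b1 b2 l u : ℝ} (hb : b2 ≤ b1) (hl : l ≤ b2)
    (hu : b1 ≤ u) : lpSet b1 b2 l u ⊆ convexHull ℝ (mipSet b1 b2 l u) := by
  rintro ⟨v, y, z⟩ ⟨hz, h1, h2, h3, h4, h5, h6, h7⟩
  dsimp only at *
  obtain ⟨t, ht, hvt⟩ := exists_eq_add_mul_sub_of_mem_Icc
    (a := l * z 0 + b1 * z 2) (b := b2 * z 0 + u * z 2) (x := v - y + b2 * z 0)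
    ⟨by linarith, by linarith⟩
  obtain ⟨r, hr, hyr⟩ := exists_eq_add_mul_sub_of_mem_Icc
    (a := b2 * z 1) (b := b1 * z 1) (x := y - b2 * z 0) ⟨by linarith, by linarith⟩
  have key := (convex_convexHull ℝ (mipSet b1 b2 l u)).sum_mem (t := Finset.univ) (w := z)
    (z := ![(l + t * (b2 - l), b2, ![1, 0, 0]),
      (b2 + r * (b1 - b2), b2 + r * (b1 - b2), ![0, 1, 0]),
      (b1 + t * (u - b1), 0, ![0, 0, 1])])
    (fun j _ => (hz j).1) (by rw [Fin.sum_univ_three, h7]) (fun j _ => subset_convexHull ℝ _ (by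
      fin_cases j
      · exact mk_mem_mipSet_single_zero hb hu (add_mul_sub_mem_Icc hl ht)
      · exact mk_mem_mipSet_single_one hl hu (add_mul_sub_mem_Icc hb hr)
      · exact mk_mem_mipSet_single_two hb hl (add_mul_sub_mem_Icc hu ht)))
  convert key using 1
  rw [Fin.sum_univ_three]
  simp only [Matrix.cons_val, Prod.smul_mk, Prod.mk_add_mk, smul_eq_mul, Prod.mk.injEq]
  refine ⟨?_, ?_, ?_⟩
  · linear_combination hvt + hyr
  · linear_combination hyr
  · ext j
    fin_cases j <;> simp

/-- The MIP formulation is ideal: the LP relaxation `P` equals the convex hull of the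
mixed-integer set `D`; in particular every extreme point of `P` is integral in `z`. -/
theorem mip_formulation_ideal (b1 b2 l u : ℝ)
    (hb2 : 0 ≤ b2) (hb : b2 ≤ b1) (hl : l ≤ b2) (hu : b1 ≤ u) :
    lpSet b1 b2 l u = convexHull ℝ (mipSet b1 b2 l u) ∧
    ∀ p ∈ Set.extremePoints ℝ (lpSet b1 b2 l u), ∀ j, p.2.2 j = 0 ∨ p.2.2 j = 1 := by
  have hull : lpSet b1 b2 l u = convexHull ℝ (mipSet b1 b2 l u) :=
    (lpSet_subset_convexHull_mipSet hb hl hu).antisymm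
      (convexHull_min (mipSet_subset_lpSet b1 b2 l u) (convex_lpSet b1 b2 l u))
  refine ⟨hull, fun p hp => ?_⟩
  rw [hull] at hp
  exact (extremePoints_convexHull_subset hp).1
end

section
/- Let 0 ≤ b2 ≤ b1 and l ≤ b2 ≤ b1 ≤ u be real numbers, and define S1 = {(v, y) : l ≤ v ≤ u, y = b2, v ≤ b2}, S2 = {(v, y) : l ≤ v ≤ u, y = v, b2 ≤ v ≤ b1}, S3 = {(v, y) : l ≤ v ≤ u, y = 0, v ≥ b1}. Then the set of pairs (v, y) ∈ ℝ² for which there exists z ∈ [0, 1]³ (no integrality required) satisfying y ≤ b2·z1 + b1·z2, y ≥ b2·(z1 + z2), y ≤ v + (b2 − l)·z1 − b1·z3, y ≥ v − u·z3, l ≤ v ≤ u, and z1 + z2 + z3 = 1, equals the convex hull of S1 ∪ S2 ∪ S3. In particular, for a single sample (n = 1) the LP relaxation is exact. -/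
/-- A number between `a * z` and `b * z` with `0 ≤ z` is `z` times a point of `[a, b]`. -/
lemma exists_mem_Icc_eq_mul {a b z w : ℝ} (hab : a ≤ b) (hz : 0 ≤ z)
    (ha : a * z ≤ w) (hb : w ≤ b * z) : ∃ x ∈ Set.Icc a b, w = z * x := by
  rcases hz.eq_or_lt with rfl | hz
  · exact ⟨a, ⟨le_rfl, hab⟩, by linarith⟩
  · exact ⟨w / z, ⟨(le_div_iff₀ hz).2 ha, (div_le_iff₀ hz).2 hb⟩, by field_simp⟩

open scoped Pointwise in
/-- A number between `a + c` and `b + d` splits as a point of `[a, b]` plus a point of `[c, d]`. -/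
lemma exists_add_eq_of_mem_Icc_add {a b c d s : ℝ} (hab : a ≤ b) (hcd : c ≤ d)
    (hl : a + c ≤ s) (hu : s ≤ b + d) :
    ∃ w ∈ Set.Icc a b, ∃ t ∈ Set.Icc c d, w + t = s := by
  have h : s ∈ Set.Icc a b + Set.Icc c d := by
    rw [Set.Icc_add_Icc hab hcd]
    exact ⟨hl, hu⟩
  exact Set.mem_add.1 h

/-- The projection of the LP relaxation onto `(v, y)` is convex. -/
lemma convex_setOf_exists_mipCon (b1 b2 l u : ℝ) :
    Convex ℝ {p : ℝ × ℝ | ∃ z : Fin 3 → ℝ,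
      (∀ j, z j ∈ Set.Icc (0 : ℝ) 1) ∧ MipCon b1 b2 l u p.1 p.2 z} := by
  rintro ⟨v, y⟩ ⟨z, hz, h1, h2, h3, h4, h5, h6, h7⟩ ⟨v', y'⟩
    ⟨z', hz', h1', h2', h3', h4', h5', h6', h7'⟩ a b ha hb hab
  refine ⟨a • z + b • z', fun j => convex_Icc (0 : ℝ) 1 (hz j) (hz' j) ha hb hab, ?_⟩
  simp only [MipCon, Prod.smul_mk, Prod.mk_add_mk, smul_eq_mul, Pi.add_apply, Pi.smul_apply]
    at h1 h2 h3 h4 h5 h6 h1' h2' h3' h4' h5' h6' ⊢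
  obtain rfl : b = 1 - a := by linarith
  refine ⟨?_, ?_, ?_, ?_, ?_, ?_, ?_⟩
  · linarith [mul_le_mul_of_nonneg_left h1 ha, mul_le_mul_of_nonneg_left h1' hb]
  · linarith [mul_le_mul_of_nonneg_left h2 ha, mul_le_mul_of_nonneg_left h2' hb]
  · linarith [mul_le_mul_of_nonneg_left h3 ha, mul_le_mul_of_nonneg_left h3' hb]
  · linarith [mul_le_mul_of_nonneg_left h4 ha, mul_le_mul_of_nonneg_left h4' hb]
  · linarith [mul_le_mul_of_nonneg_left h5 ha, mul_le_mul_of_nonneg_left h5' hb]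
  · linarith [mul_le_mul_of_nonneg_left h6 ha, mul_le_mul_of_nonneg_left h6' hb]
  · linear_combination a * h7 + (1 - a) * h7'

/-- The projection onto `(v, y)` of the LP relaxation of the single-sample MIP formulation
equals the convex hull of `S1 ∪ S2 ∪ S3`: the LP relaxation is exact for one sample. -/
theorem lp_relaxation_single_sample_exact (b1 b2 l u : ℝ)
    (hb2 : 0 ≤ b2) (hb : b2 ≤ b1) (hl : l ≤ b2) (hu : b1 ≤ u) :
    {p : ℝ × ℝ | ∃ z : Fin 3 → ℝ,
        (∀ j, z j ∈ Set.Icc (0 : ℝ) 1) ∧ MipCon b1 b2 l u p.1 p.2 z} =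
      convexHull ℝ
        ({p : ℝ × ℝ | l ≤ p.1 ∧ p.1 ≤ u ∧ p.2 = b2 ∧ p.1 ≤ b2} ∪
         {p : ℝ × ℝ | l ≤ p.1 ∧ p.1 ≤ u ∧ p.2 = p.1 ∧ b2 ≤ p.1 ∧ p.1 ≤ b1} ∪
         {p : ℝ × ℝ | l ≤ p.1 ∧ p.1 ≤ u ∧ p.2 = 0 ∧ b1 ≤ p.1}) := by
  apply Set.Subset.antisymm
  · rintro ⟨v, y⟩ ⟨z, hz, h1, h2, h3, h4, -, -, h7⟩
    dsimp only at h1 h2 h3 h4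
    have hz0 := (hz 0).1
    have hz1 := (hz 1).1
    have hz2 := (hz 2).1
    obtain ⟨w, hw, t, ht, hwt⟩ := exists_add_eq_of_mem_Icc_add (s := v - y + b2 * z 0)
      (mul_le_mul_of_nonneg_right hl hz0) (mul_le_mul_of_nonneg_right hu hz2)
      (by linarith) (by linarith)
    obtain ⟨x₁, hx₁, rfl⟩ := exists_mem_Icc_eq_mul hl hz0 hw.1 hw.2
    obtain ⟨x₂, hx₂, hy⟩ := exists_mem_Icc_eq_mul (w := y - b2 * z 0) hb hz1
      (by linarith) (by linarith)
    obtain ⟨x₃, hx₃, rfl⟩ := exists_mem_Icc_eq_mul hu hz2 ht.1 ht.2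
    have hsum : ((v, y) : ℝ × ℝ) = ∑ j, z j • ![(x₁, b2), (x₂, x₂), (x₃, 0)] j := by
      simp only [Fin.sum_univ_three, Matrix.cons_val, Prod.smul_mk, Prod.mk_add_mk, smul_eq_mul,
        Prod.mk.injEq]
      constructor <;> linarith
    rw [hsum]
    refine (convex_convexHull ℝ _).sum_mem (fun j _ => (hz j).1)
      (by rw [Fin.sum_univ_three, h7]) fun j _ => subset_convexHull ℝ _ ?_
    obtain ⟨hx₁l, hx₁u⟩ := hx₁
    obtain ⟨hx₂l, hx₂u⟩ := hx₂
    obtain ⟨hx₃l, hx₃u⟩ := hx₃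
    fin_cases j
    · exact Or.inl (Or.inl ⟨hx₁l, by dsimp; linarith, rfl, hx₁u⟩)
    · exact Or.inl (Or.inr ⟨by dsimp; linarith, by dsimp; linarith, rfl, hx₂l, hx₂u⟩)
    · exact Or.inr ⟨by dsimp; linarith, hx₃u, rfl, hx₃l⟩
  · refine convexHull_min ?_ (convex_setOf_exists_mipCon b1 b2 l u)
    rintro ⟨v, y⟩ ((⟨hlv, hvu, hy, h⟩ | ⟨hlv, hvu, hy, h, h'⟩) | ⟨hlv, hvu, hy, h⟩) <;>
      dsimp only at hlv hvu hy h
    · refine ⟨![1, 0, 0], by simp [Fin.forall_fin_succ], ?_⟩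
      simp only [MipCon, Matrix.cons_val]
      refine ⟨?_, ?_, ?_, ?_, ?_, ?_, ?_⟩ <;> linarith
    · refine ⟨![0, 1, 0], by simp [Fin.forall_fin_succ], ?_⟩
      simp only [MipCon, Matrix.cons_val]
      refine ⟨?_, ?_, ?_, ?_, ?_, ?_, ?_⟩ <;> linarith
    · refine ⟨![0, 0, 1], by simp [Fin.forall_fin_succ], ?_⟩
      simp only [MipCon, Matrix.cons_val]
      refine ⟨?_, ?_, ?_, ?_, ?_, ?_, ?_⟩ <;> linarith
end

section
/- Consider n samples with feature vectors w^1, …, w^n ∈ ℝ^d and bid prices 0 ≤ b2_i ≤ b1_i, let X = [L, U]^d with L < U, and define R(β) = (1/n) ∑_{i=1}^n r(w^i · β; b1_i, b2_i), l_i = min_{β ∈ X} w^i · β, and u_i = max_{β ∈ X} w^i · β. Consider the MIP problem: maximize (1/n) ∑_{i=1}^n y_i over (β, v, y, z) with β ∈ X, v_i = w^i · β, and for each i there exists z^i ∈ {0, 1}³ with y_i ≤ b2_i·z^i_1 + b1_i·z^i_2, y_i ≥ b2_i·(z^i_1 + z^i_2), y_i ≤ v_i + (b2_i − l_i)·z^i_1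 − b1_i·z^i_3, y_i ≥ v_i − u_i·z^i_3, l_i ≤ v_i ≤ u_i, z^i_1 + z^i_2 + z^i_3 = 1. Then: (i) if (β, v, y) is part of an optimal solution of the MIP, then β maximizes R over X; and (ii) if β maximizes R over X, then there exist v and y completing it to an optimal solution of the MIP, and the two optimal values coincide. -/
open Finset

/-- Feasibility for the full MIP: `β ∈ X`, `vᵢ = wⁱ · β`, and for each sample `i` there is a
binary `zⁱ` satisfying the MIP constraints. -/
def MipFeasible (d n : ℕ) (w : Fin n → Fin d → ℝ) (b1 b2 l u : Fin n → ℝ) (L U : ℝ)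
    (β : Fin d → ℝ) (v y : Fin n → ℝ) : Prop :=
  β ∈ box d L U ∧ ∀ i, v i = (∑ j, w i j * β j) ∧
    ∃ z : Fin 3 → ℝ, (∀ j, z j = 0 ∨ z j = 1) ∧
      MipCon (b1 i) (b2 i) (l i) (u i) (v i) (y i) z

theorem reward_nonneg {b1 b2 : ℝ} (hb2 : 0 ≤ b2) (v : ℝ) : 0 ≤ reward b1 b2 v := by
  unfold reward
  split_ifs <;> linarith

/-- Every binary point of the single-sample formulation has `y` at most the reward. -/
theorem MipCon.le_reward {b1 b2 l u v y : ℝ} {z : Fin 3 → ℝ} (hb2 : 0 ≤ b2)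
    (hz : ∀ j, z j = 0 ∨ z j = 1) (h : MipCon b1 b2 l u v y z) : y ≤ reward b1 b2 v := by
  obtain ⟨h1, h2, h3, h4, h5, h6, h7⟩ := h
  have hr := reward_nonneg (b1 := b1) hb2 v
  unfold reward at hr ⊢
  rcases hz 0 with e0 | e0 <;> rcases hz 1 with e1 | e1 <;> rcases hz 2 with e2 | e2 <;>
    simp only [e0, e1, e2] at h1 h2 h3 h4 h7 <;> norm_num at h7 <;>
    split_ifs at hr ⊢ <;> linarith

/-- The reward is attained by a binary point of the single-sample formulation. -/
theorem exists_mipCon_reward {b1 b2 l u v : ℝ} (hl : l ≤ v) (hu : v ≤ u) :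
    ∃ z : Fin 3 → ℝ, (∀ j, z j = 0 ∨ z j = 1) ∧ MipCon b1 b2 l u v (reward b1 b2 v) z := by
  unfold reward
  split_ifs with h1 h2
  · refine ⟨![1, 0, 0], by simp [Fin.forall_fin_succ], ?_⟩
    simp [MipCon]
    grind
  · refine ⟨![0, 1, 0], by simp [Fin.forall_fin_succ], ?_⟩
    simp [MipCon]
    grind
  · refine ⟨![0, 0, 1], by simp [Fin.forall_fin_succ], ?_⟩
    simp [MipCon]
    grind

theorem MipFeasible.avg_le_avgReward {d n : ℕ} {w : Fin n → Fin d → ℝ} {b1 b2 l u : Fin n → ℝ}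
    {L U : ℝ} {β : Fin d → ℝ} {v y : Fin n → ℝ} (hb2 : ∀ i, 0 ≤ b2 i)
    (h : MipFeasible d n w b1 b2 l u L U β v y) :
    (1 / n : ℝ) * ∑ i, y i ≤ avgReward d n w b1 b2 β := by
  refine mul_le_mul_of_nonneg_left (Finset.sum_le_sum fun i _ => ?_) (by positivity)
  obtain ⟨hv, z, hz, hcon⟩ := h.2 i
  exact hv ▸ hcon.le_reward (hb2 i) hz

theorem mipFeasible_reward {d n : ℕ} {w : Fin n → Fin d → ℝ} {b1 b2 l u : Fin n → ℝ}
    {L U : ℝ} {β : Fin d → ℝ}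
    (hl : ∀ i, l i ∈ lowerBounds ((fun β => ∑ j, w i j * β j) '' box d L U))
    (hu : ∀ i, u i ∈ upperBounds ((fun β => ∑ j, w i j * β j) '' box d L U))
    (hβ : β ∈ box d L U) :
    MipFeasible d n w b1 b2 l u L U β (fun i => ∑ j, w i j * β j)
      (fun i => reward (b1 i) (b2 i) (∑ j, w i j * β j)) :=
  ⟨hβ, fun i => ⟨rfl, exists_mipCon_reward (hl i ⟨β, hβ, rfl⟩) (hu i ⟨β, hβ, rfl⟩)⟩⟩

/-- The MIP formulation is equivalent to the original reserve price optimization problem. -/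
theorem mip_problem_equiv (d n : ℕ) (hn : 0 < n)
    (w : Fin n → Fin d → ℝ) (b1 b2 : Fin n → ℝ)
    (hb2 : ∀ i, 0 ≤ b2 i) (hb : ∀ i, b2 i ≤ b1 i)
    (L U : ℝ) (hLU : L < U) (l u : Fin n → ℝ)
    (hl : ∀ i, IsLeast ((fun β => ∑ j, w i j * β j) '' box d L U) (l i))
    (hu : ∀ i, IsGreatest ((fun β => ∑ j, w i j * β j) '' box d L U) (u i)) :
    (∀ β v y,
      (MipFeasible d n w b1 b2 l u L U β v y ∧
        ∀ β' v' y', MipFeasible d n w b1 b2 l u L U β' v' y' →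
          (1 / n : ℝ) * ∑ i, y' i ≤ (1 / n : ℝ) * ∑ i, y i) →
      (β ∈ box d L U ∧
        ∀ β' ∈ box d L U, avgReward d n w b1 b2 β' ≤ avgReward d n w b1 b2 β))
    ∧
    (∀ β, β ∈ box d L U →
      (∀ β' ∈ box d L U, avgReward d n w b1 b2 β' ≤ avgReward d n w b1 b2 β) →
      ∃ v y,
        (MipFeasible d n w b1 b2 l u L U β v y ∧
          ∀ β' v' y', MipFeasible d n w b1 b2 l u L U β' v' y' →
            (1 / n : ℝ) * ∑ i, y' i ≤ (1 / n : ℝ) * ∑ i, y i) ∧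
        (1 / n : ℝ) * ∑ i, y i = avgReward d n w b1 b2 β) := by
  have feas {β : Fin d → ℝ} (hβ : β ∈ box d L U) :=
    mipFeasible_reward (b1 := b1) (b2 := b2) (fun i => (hl i).2) (fun i => (hu i).2) hβ
  refine ⟨fun β v y ⟨hf, hopt⟩ => ⟨hf.1, fun β' hβ' => ?_⟩, fun β hβ hmax => ?_⟩
  · exact (hopt _ _ _ (feas hβ')).trans (hf.avg_le_avgReward hb2)
  · exact ⟨_, _, ⟨feas hβ, fun β' v' y' hf =>
      (hf.avg_le_avgReward hb2).trans (hmax β' hf.1)⟩, rfl⟩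
end

section
/- For every integer i ≥ 2, consider the instance with n = 2 samples and d = 2 features given by w^1 = (√(1 − i⁻²), i⁻¹), w^2 = (−√(1 − i⁻²), i⁻¹), with first bid b1 = 1 and second bid b2 = 0 for both samples. Then ‖w^1‖₂ = ‖w^2‖₂ = 1 (so all problem data is bounded in magnitude by one), and the function R(β) = (1/2)·(r(w^1 · β; 1, 0) + r(w^2 · β; 1, 0)) attains its maximum over all of ℝ² uniquely at β* = (0, i), whose magnitude grows arbitrarily large as i → ∞. -/
/-- The average revenue for the 2-sample, 2-feature instance with
`w¹ = (√(1 − i⁻²), i⁻¹)`, `w² = (−√(1 − i⁻²), i⁻¹)`, `b1 = 1`, `b2 = 0`. -/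
noncomputable def avgRewardUnbdd (i : ℕ) (β : ℝ × ℝ) : ℝ :=
  (1 / 2 : ℝ) *
    (reward 1 0 (Real.sqrt (1 - ((i : ℝ))⁻¹ ^ 2) * β.1 + (i : ℝ)⁻¹ * β.2) +
     reward 1 0 (-Real.sqrt (1 - ((i : ℝ))⁻¹ ^ 2) * β.1 + (i : ℝ)⁻¹ * β.2))

theorem reward_one_zero_one : reward 1 0 1 = 1 := by
  norm_num [reward]

theorem reward_one_zero_le_one (v : ℝ) : reward 1 0 v ≤ 1 := by
  unfold reward
  split_ifs <;> linarith

theorem eq_one_of_one_le_reward {v : ℝ} (h : 1 ≤ reward 1 0 v) : v = 1 := by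
  unfold reward at h
  split_ifs at h <;> linarith

/-- For each `i ≥ 2`, the problem data has Euclidean norm one, yet the unique maximizer of the
average revenue over all of `ℝ²` is `β* = (0, i)`, whose magnitude grows arbitrarily large. -/
theorem unbounded_optimal_solution (i : ℕ) (hi : 2 ≤ i) :
    Real.sqrt ((Real.sqrt (1 - ((i : ℝ))⁻¹ ^ 2)) ^ 2 + ((i : ℝ)⁻¹) ^ 2) = 1 ∧
    Real.sqrt ((-Real.sqrt (1 - ((i : ℝ))⁻¹ ^ 2)) ^ 2 + ((i : ℝ)⁻¹) ^ 2) = 1 ∧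
    (∀ β : ℝ × ℝ, avgRewardUnbdd i β ≤ avgRewardUnbdd i (0, (i : ℝ))) ∧
    (∀ β : ℝ × ℝ, β ≠ (0, (i : ℝ)) →
      avgRewardUnbdd i β < avgRewardUnbdd i (0, (i : ℝ))) := by
  have hi0 : (0 : ℝ) < i := by exact_mod_cast (by omega : 0 < i)
  have hinv : ((i : ℝ))⁻¹ ^ 2 < 1 := by
    have h1 : (1 : ℝ) < i := by exact_mod_cast hi
    exact pow_lt_one₀ (by positivity) (inv_lt_one_of_one_lt₀ h1) two_ne_zero
  have hsq : Real.sqrt (1 - ((i : ℝ))⁻¹ ^ 2) ^ 2 = 1 - ((i : ℝ))⁻¹ ^ 2 :=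
    Real.sq_sqrt (by linarith)
  have hpos : 0 < Real.sqrt (1 - ((i : ℝ))⁻¹ ^ 2) := Real.sqrt_pos.2 (by linarith)
  have hmax : avgRewardUnbdd i (0, (i : ℝ)) = 1 := by
    simp [avgRewardUnbdd, inv_mul_cancel₀ hi0.ne', reward_one_zero_one]
    norm_num
  have hlt : ∀ β : ℝ × ℝ, β ≠ (0, (i : ℝ)) →
      avgRewardUnbdd i β < avgRewardUnbdd i (0, (i : ℝ)) := by
    intro β hβ
    rw [hmax]
    by_contra! hge
    unfold avgRewardUnbdd at hge
    set s := Real.sqrt (1 - ((i : ℝ))⁻¹ ^ 2)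
    have hle₁ := reward_one_zero_le_one (s * β.1 + (i : ℝ)⁻¹ * β.2)
    have hle₂ := reward_one_zero_le_one (-s * β.1 + (i : ℝ)⁻¹ * β.2)
    have heq₁ := eq_one_of_one_le_reward (v := s * β.1 + (i : ℝ)⁻¹ * β.2) (by linarith)
    have heq₂ := eq_one_of_one_le_reward (v := -s * β.1 + (i : ℝ)⁻¹ * β.2) (by linarith)
    have hfst : β.1 = 0 :=
      (mul_eq_zero.1 (by linarith : s * β.1 = 0)).resolve_left hpos.ne'
    have hsnd : β.2 = i := by
      have h : (i : ℝ)⁻¹ * β.2 = 1 := by linarith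
      field_simp at h
      exact h
    exact hβ (Prod.ext hfst hsnd)
  refine ⟨by rw [hsq]; simp, by rw [neg_sq, hsq]; simp, fun β => ?_, hlt⟩
  rcases eq_or_ne β (0, (i : ℝ)) with rfl | hβ
  · exact le_rfl
  · exact (hlt β hβ).le
end

section
/- Fix a positive integer T and consider the instance with n = 2T samples, d = 2, X = [−1, 1] × {1}, feature vectors w^{+,i} = (T, 1 − i) and w^{−,i} = (−T, 1 − i) for i = 1, …, T, and bid prices b1 = 1, b2 = 0 for all samples. Then for every β ∈ X, R(β) = (1/(2T)) ∑_{i=1}^T (r(w^{+,i} · β; 1, 0) + r(w^{−,i} · β; 1, 0)) ≤ 1/(2T), and this bound is attained (for example at β = (1/T, 1)); hence the optimal reward of the original problem equals 1/(2T). -/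
open Finset

/-- The average revenue for the `2T`-sample instance with `w^{+,i} = (T, 1 − i)`,
`w^{−,i} = (−T, 1 − i)` for `i = 1, …, T`, and `b1 = 1`, `b2 = 0` throughout. -/
noncomputable def avgRewardLPbad (T : ℕ) (β : ℝ × ℝ) : ℝ :=
  (1 / (2 * T) : ℝ) * ∑ i ∈ Finset.Icc 1 T,
    (reward 1 0 ((T : ℝ) * β.1 + (1 - (i : ℝ)) * β.2) +
     reward 1 0 (-(T : ℝ) * β.1 + (1 - (i : ℝ)) * β.2))

/-- With bids `1` and `0`, the reward at `y + 1 - i` is supported on `i = ⌈y⌉₊`. -/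
lemma reward_add_one_sub_le (y : ℝ) (i : ℕ) (hi : 1 ≤ i) :
    reward 1 0 (y + (1 - (i : ℝ))) ≤ if i = ⌈y⌉₊ then 1 else 0 := by
  have reward_le_one : reward 1 0 (y + (1 - (i : ℝ))) ≤ 1 := by
    unfold reward
    split_ifs <;> linarith
  split_ifs with h
  · exact reward_le_one
  · unfold reward
    split_ifs with h0 h1
    · exact le_rfl
    · refine absurd ?_ h
      rw [eq_comm, Nat.ceil_eq_iff (by lia)]
      push_cast [Nat.cast_sub hi]
      constructor <;> linarith
    · exact le_rfl

lemma sum_reward_add_one_sub_le (T : ℕ) (y : ℝ) :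
    ∑ i ∈ Finset.Icc 1 T, reward 1 0 (y + (1 - (i : ℝ))) ≤ if 0 < y then 1 else 0 := by
  refine (Finset.sum_le_sum fun i hi =>
    reward_add_one_sub_le y i (Finset.mem_Icc.1 hi).1).trans ?_
  rw [Finset.sum_ite_eq']
  split_ifs with h hy
  · exact le_rfl
  · exact absurd (Nat.ceil_pos.1 (Finset.mem_Icc.1 h).1) hy
  · exact zero_le_one
  · exact le_rfl

/-- Over `X = [−1, 1] × {1}`, the optimal reward of the bad-LP instance equals `1/(2T)`:
every feasible `β` attains at most `1/(2T)`, and `β = (1/T, 1)` attains it. -/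
theorem optimal_reward_eq (T : ℕ) (hT : 0 < T) :
    (∀ β : ℝ × ℝ, β.1 ∈ Set.Icc (-1 : ℝ) 1 → β.2 = 1 →
      avgRewardLPbad T β ≤ 1 / (2 * T)) ∧
    avgRewardLPbad T (1 / T, 1) = 1 / (2 * T) := by
  have hT' : (0 : ℝ) < T := by exact_mod_cast hT
  refine ⟨fun β _ hβ => ?_, ?_⟩
  · unfold avgRewardLPbad
    refine mul_le_of_le_one_right (by positivity) ?_
    simp only [hβ, mul_one]
    rw [Finset.sum_add_distrib]
    have hpos := sum_reward_add_one_sub_le T (T * β.1)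
    have hneg := sum_reward_add_one_sub_le T (-T * β.1)
    split_ifs at hpos hneg <;> linarith
  · unfold avgRewardLPbad
    rw [Finset.sum_eq_single_of_mem 1 (Finset.mem_Icc.2 ⟨le_rfl, hT⟩)]
    · simp [reward, hT'.ne']
    · intro i hi hne
      have hi2 : (2 : ℝ) ≤ i := by
        have := (Finset.mem_Icc.1 hi).1
        exact_mod_cast (show 2 ≤ i by lia)
      have hmul : (T : ℝ) * (1 / T) = 1 := mul_one_div_cancel hT'.ne'
      simp only [reward, neg_mul, hmul, mul_one]
      rw [if_pos (by linarith), if_pos (by linarith), add_zero]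
end

section
/- Fix a positive integer T and consider the instance with n = 2T samples, d = 2, X = [−1, 1] × {1}, feature vectors w^{+,i} = (T, 1 − i) and w^{−,i} = (−T, 1 − i) for i = 1, …, T, and bid prices b1 = 1, b2 = 0 for all samples. Then for every β ∈ X, at most one of the 2T values r(w^{+,1} · β; 1, 0), …, r(w^{+,T} · β; 1, 0), r(w^{−,1} · β; 1, 0), …, r(w^{−,T} · β; 1, 0) is strictly positive. -/
open Finset

/-- A reward with `b2 = 0` is positive only on the interval `(0, b1]`. -/
lemma mem_Ioc_of_reward_pos {b v : ℝ} (h : 0 < reward b 0 v) : v ∈ Set.Ioc 0 b := by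
  unfold reward at h
  split_ifs at h with h0 h1
  · exact absurd h (lt_irrefl 0)
  · exact ⟨not_le.mp h0, h1⟩
  · exact absurd h (lt_irrefl 0)

/-- Half-open unit intervals `(i - 1, i]` with distinct integer endpoints are disjoint. -/
lemma eq_of_sub_mem_Ioc {x : ℝ} {i j : ℕ} (hi : x + (1 - (i : ℝ)) ∈ Set.Ioc (0 : ℝ) 1)
    (hj : x + (1 - (j : ℝ)) ∈ Set.Ioc (0 : ℝ) 1) : i = j := by
  obtain ⟨hi0, hi1⟩ := hi
  obtain ⟨hj0, hj1⟩ := hj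
  have hij : (i : ℝ) < j + 1 := by linarith
  have hji : (j : ℝ) < i + 1 := by linarith
  norm_cast at hij hji
  omega

/-- In the instance with feature vectors `w^{+,i} = (T, 1 − i)` and `w^{−,i} = (−T, 1 − i)`
for `i = 1, …, T` (with `b1 = 1`, `b2 = 0`), for every `β ∈ [−1, 1] × {1}` at most one of the
`2T` rewards is strictly positive: if two of them (indexed by `(i, si)` and `(j, sj)`, where
the Boolean records the `±` sign) are positive, then the indices coincide. -/
theorem at_most_one_positive_reward (T : ℕ) (hT : 0 < T)
    (β : ℝ × ℝ) (hβ1 : β.1 ∈ Set.Icc (-1 : ℝ) 1) (hβ2 : β.2 = 1)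
    (i j : ℕ) (hi : i ∈ Finset.Icc 1 T) (hj : j ∈ Finset.Icc 1 T) (si sj : Bool)
    (hpos_i :
      0 < reward 1 0 ((if si then (T : ℝ) else -(T : ℝ)) * β.1 + (1 - (i : ℝ)) * β.2))
    (hpos_j :
      0 < reward 1 0 ((if sj then (T : ℝ) else -(T : ℝ)) * β.1 + (1 - (j : ℝ)) * β.2)) :
    i = j ∧ si = sj := by
  have hi1 : (1 : ℝ) ≤ i := by exact_mod_cast (Finset.mem_Icc.mp hi).1
  have hj1 : (1 : ℝ) ≤ j := by exact_mod_cast (Finset.mem_Icc.mp hj).1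
  have hri := mem_Ioc_of_reward_pos hpos_i
  have hrj := mem_Ioc_of_reward_pos hpos_j
  rw [hβ2, mul_one] at hri hrj
  have hsign : si = sj := by
    have hi0 := hri.1
    have hj0 := hrj.1
    cases si <;> cases sj <;> simp at hi0 hj0 ⊢ <;> linarith
  subst hsign
  exact ⟨eq_of_sub_mem_Ioc hri hrj, rfl⟩
end

section
/- Let l and u be real numbers with l ≤ 0 and u > 1. Then the convex hull of the closure of the graph {(v, r(v; 1, 0)) : v ∈ [l, u]} equals Q(l, u) := {(v, y) ∈ [l, u] × ℝ : y ≥ 0, y ≤ (v − l)/(1 − l), y ≤ (u − v)/(u − 1)}. -/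
/-- The triangle with vertices `(l, 0)`, `(1, 1)`, `(u, 0)`, with denominators cleared. -/
lemma triangle_eq (l u : ℝ) (hl : l ≤ 0) (hu : 1 < u) :
    {p : ℝ × ℝ | p.1 ∈ Set.Icc l u ∧ 0 ≤ p.2 ∧
        p.2 ≤ (p.1 - l) / (1 - l) ∧ p.2 ≤ (u - p.1) / (u - 1)} =
      {p : ℝ × ℝ | 0 ≤ p.2 ∧ p.2 * (1 - l) ≤ p.1 - l ∧ p.2 * (u - 1) ≤ u - p.1} := by
  ext ⟨v, y⟩
  have h1 : 0 < 1 - l := by linarith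
  have h2 : 0 < u - 1 := by linarith
  simp only [Set.mem_ofPred_eq, Set.mem_Icc, le_div_iff₀ h1, le_div_iff₀ h2]
  refine ⟨fun h => h.2, fun h => ⟨⟨?_, ?_⟩, h⟩⟩
  · linarith [mul_nonneg h.1 h1.le]
  · linarith [mul_nonneg h.1 h2.le]

lemma convex_triangle (l u : ℝ) :
    Convex ℝ {p : ℝ × ℝ | 0 ≤ p.2 ∧ p.2 * (1 - l) ≤ p.1 - l ∧ p.2 * (u - 1) ≤ u - p.1} := by
  rintro ⟨v, y⟩ ⟨hy, h₁, h₂⟩ ⟨w, z⟩ ⟨hz, k₁, k₂⟩ a b ha hb hab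
  obtain rfl : b = 1 - a := by linarith
  simp only [Set.mem_ofPred_eq, Prod.smul_mk, Prod.mk_add_mk, smul_eq_mul] at *
  refine ⟨by positivity, ?_, ?_⟩
  · linarith [mul_le_mul_of_nonneg_left h₁ ha, mul_le_mul_of_nonneg_left k₁ hb]
  · linarith [mul_le_mul_of_nonneg_left h₂ ha, mul_le_mul_of_nonneg_left k₂ hb]

lemma isClosed_triangle (l u : ℝ) :
    IsClosed {p : ℝ × ℝ | 0 ≤ p.2 ∧ p.2 * (1 - l) ≤ p.1 - l ∧ p.2 * (u - 1) ≤ u - p.1} := by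
  simp only [Set.ofPred_and]
  exact (isClosed_le (by fun_prop) (by fun_prop)).inter
    ((isClosed_le (by fun_prop) (by fun_prop)).inter (isClosed_le (by fun_prop) (by fun_prop)))

lemma graph_subset_triangle (l u : ℝ) (hl : l ≤ 0) (hu : 1 < u) :
    {p : ℝ × ℝ | p.1 ∈ Set.Icc l u ∧ p.2 = reward 1 0 p.1} ⊆
      {p : ℝ × ℝ | 0 ≤ p.2 ∧ p.2 * (1 - l) ≤ p.1 - l ∧ p.2 * (u - 1) ≤ u - p.1} := by
  rintro ⟨v, y⟩ ⟨⟨hlv, hvu⟩, hy⟩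
  simp only [reward] at hlv hvu hy
  simp only [Set.mem_ofPred_eq]
  split_ifs at hy with h0 h1
  · subst hy
    refine ⟨le_rfl, ?_, ?_⟩ <;> linarith
  · subst hy
    refine ⟨by linarith, ?_, ?_⟩ <;> nlinarith
  · subst hy
    refine ⟨le_rfl, ?_, ?_⟩ <;> linarith

lemma triangle_subset_convexHull (l u : ℝ) (hl : l ≤ 0) (hu : 1 < u) :
    {p : ℝ × ℝ | 0 ≤ p.2 ∧ p.2 * (1 - l) ≤ p.1 - l ∧ p.2 * (u - 1) ≤ u - p.1} ⊆
      convexHull ℝ {((l, 0) : ℝ × ℝ), (1, 1), (u, 0)} := by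
  rintro ⟨v, y⟩ ⟨hy, h₁, h₂⟩
  simp only at hy h₁ h₂
  have hd : 0 < u - l := by linarith
  have key := (convex_convexHull ℝ {((l, 0) : ℝ × ℝ), (1, 1), (u, 0)}).sum_mem
    (t := Finset.univ) (w := ![((1 - y) * u - v + y) / (u - l), y, (v - y - (1 - y) * l) / (u - l)])
    (z := ![(l, 0), (1, 1), (u, 0)]) ?_ ?_ ?_
  · convert key using 1
    simp only [Fin.sum_univ_three, Matrix.cons_val, Prod.smul_mk, Prod.mk_add_mk, smul_eq_mul,
      Prod.mk.injEq]
    constructor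
    · field_simp
      ring
    · ring
  · intro i _
    fin_cases i
    · exact div_nonneg (by linarith) hd.le
    · exact hy
    · exact div_nonneg (by linarith) hd.le
  · simp only [Fin.sum_univ_three, Matrix.cons_val]
    field_simp
    ring
  · intro i _
    fin_cases i <;> exact subset_convexHull ℝ _ (by simp)

/-- For `l ≤ 0 < 1 < u`, the convex hull of the closure of the graph of `r(·; 1, 0)` on
`[l, u]` is `Q(l, u) = {(v, y) ∈ [l, u] × ℝ : y ≥ 0, y ≤ (v − l)/(1 − l), y ≤ (u − v)/(u − 1)}`. -/
theorem convexHull_closure_graph (l u : ℝ) (hl : l ≤ 0) (hu : 1 < u) :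
    convexHull ℝ (closure {p : ℝ × ℝ | p.1 ∈ Set.Icc l u ∧ p.2 = reward 1 0 p.1}) =
      {p : ℝ × ℝ | p.1 ∈ Set.Icc l u ∧ 0 ≤ p.2 ∧
        p.2 ≤ (p.1 - l) / (1 - l) ∧ p.2 ≤ (u - p.1) / (u - 1)} := by
  rw [triangle_eq l u hl hu]
  refine (convexHull_min (closure_minimal (graph_subset_triangle l u hl hu)
    (isClosed_triangle l u)) (convex_triangle l u)).antisymm
    ((triangle_subset_convexHull l u hl hu).trans
      (convexHull_mono (Set.Subset.trans ?_ subset_closure)))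
  rintro q (rfl | rfl | rfl)
  · exact ⟨⟨le_rfl, by linarith⟩, by simp [reward, hl]⟩
  · exact ⟨⟨by linarith, hu.le⟩, by norm_num [reward]⟩
  · exact ⟨⟨by linarith, le_rfl⟩, by simp [reward, hu]⟩
end

section
/- Let G = (V_G, E_G) be a finite simple graph and let k ≥ 1 be an integer. Construct the reserve-price instance with n = |V_G|² + |E_G| samples: |V_G|² samples with feature vector 𝟙 (the all-ones vector in ℝ^{V_G}), first bid k and second bid 0; and for each edge e = {u, v} ∈ E_G one sample with feature vector 𝟙_e (equal to 1 in coordinates u and v and 0 elsewhere), first bid 2 and second bid 1.5. For a vertex subset V_H ⊆ V_G with |V_H| = k, let β_H ∈ {0, 1}^{V_G} be its indicator vector and let E_H be the set of edges of G with both endpoints in V_H. Then R(β_H) = (1/n)·(k·|V_G|² + 1.5·|E_G| + 0.5·|E_H|), where R(β) is the average of r(w · β; b1, b2) over the n samples. -/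
open Finset
open scoped Classical

/-- In the hardness reduction instance built from a graph `G` and `k ≥ 1`
(`|V_G|²` samples `(𝟙, k, 0)` and one sample `(𝟙_e, 2, 1.5)` per edge `e`),
the average revenue of the indicator vector `β_H` of a `k`-vertex subset `V_H` is
`(1/n)(k·|V_G|² + 1.5·|E_G| + 0.5·|E_H|)`. -/
theorem reward_of_indicator {V : Type*} [Fintype V] [DecidableEq V]
    (G : SimpleGraph V) [DecidableRel G.Adj]
    (k : ℕ) (hk : 1 ≤ k) (VH : Finset V) (hVH : VH.card = k)
    (n : ℕ) (hn : n = (Fintype.card V) ^ 2 + G.edgeFinset.card)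
    (β : V → ℝ) (hβ : ∀ v, β v = if v ∈ VH then 1 else 0)
    (EH : Finset (Sym2 V))
    (hEH : EH = G.edgeFinset.filter (fun e => ∀ v ∈ e, v ∈ VH)) :
    (1 / (n : ℝ)) *
        (((Fintype.card V) ^ 2 : ℝ) * reward (k : ℝ) 0 (∑ v, β v) +
          ∑ e ∈ G.edgeFinset,
            reward 2 1.5 (Sym2.lift ⟨fun a b => β a + β b, fun a b => by ring⟩ e)) =
      (1 / (n : ℝ)) *
        ((k : ℝ) * ((Fintype.card V) ^ 2 : ℝ) + 1.5 * (G.edgeFinset.card : ℝ) +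
          0.5 * (EH.card : ℝ)) := by
  have hsum : ∑ v, β v = (k : ℝ) := by
    simp [hβ, hVH]
  have hk0 : ¬ (k : ℝ) ≤ 0 := by
    have : (1 : ℝ) ≤ k := by exact_mod_cast hk
    linarith
  have hedge : ∀ e : Sym2 V,
      reward 2 1.5 (Sym2.lift ⟨fun a b => β a + β b, fun a b => by ring⟩ e) =
        1.5 + 0.5 * (if ∀ v ∈ e, v ∈ VH then 1 else 0) := by
    intro e
    induction e using Sym2.ind with
    | _ a b =>
      by_cases ha : a ∈ VH <;> by_cases hb : b ∈ VH <;>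
        norm_num [reward, hβ, ha, hb]
  have hcard : (EH.card : ℝ) =
      ∑ e ∈ G.edgeFinset, if ∀ v ∈ e, v ∈ VH then (1 : ℝ) else 0 := by
    rw [hEH, Finset.sum_boole]
  rw [hsum, Finset.sum_congr rfl fun e _ => hedge e, Finset.sum_add_distrib,
    ← Finset.mul_sum, ← hcard, Finset.sum_const, nsmul_eq_mul, reward, if_neg hk0, if_pos le_rfl]
  ring
end

section
/- Let G = (V_G, E_G) be a finite simple graph and let k ≥ 1 be an integer. Construct the reserve-price instance with n = |V_G|² + |E_G| samples: |V_G|² samples with feature vector 𝟙 (the all-ones vector in ℝ^{V_G}), first bid k and second bid 0; and for each edge e = {u, v} ∈ E_G one sample with feature vector 𝟙_e (equal to 1 in coordinates u and v and 0 elsewhere), first bid 2 and second bid 1.5. For any β ∈ [0, 1]^{V_G}, let E^β be the set of edges of G both of whose endpoints v satisfy β_v ≥ 0.5. Then R(β) ≤ (1/n)·(k·|V_G|² + 1.5·|E_G| + 0.5·|E^β|), where R(β) is the average of r(w · β; b1, b2) over the n samples. -/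
open Finset
open scoped Classical

/-- The reward never exceeds the first bid. -/
theorem reward_le {b1 b2 v : ℝ} (h0 : 0 ≤ b1) (h : b2 ≤ b1) :
    reward b1 b2 v ≤ b1 := by
  unfold reward
  split_ifs <;> assumption

/-- An edge sample earns more than its second bid only if both coordinates are at least `0.5`. -/
theorem reward_edge_le {x y : ℝ} (hx : x ≤ 1) (hy : y ≤ 1) :
    reward 2 1.5 (x + y) ≤ 1.5 + 0.5 * (if (0.5 : ℝ) ≤ x ∧ (0.5 : ℝ) ≤ y then 1 else 0) := by
  unfold reward
  split_ifs with h1 h2 h3 h3 h3 <;> norm_num at * <;> grind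

/-- In the hardness reduction instance built from a graph `G` and `k ≥ 1`
(`|V_G|²` samples `(𝟙, k, 0)` and one sample `(𝟙_e, 2, 1.5)` per edge `e`),
for any `β ∈ [0, 1]^{V_G}` the average revenue is bounded by
`(1/n)(k·|V_G|² + 1.5·|E_G| + 0.5·|E^β|)`, where `E^β` is the set of edges both of whose
endpoints `v` satisfy `β_v ≥ 0.5`. -/
theorem reward_upper_bound {V : Type*} [Fintype V] [DecidableEq V]
    (G : SimpleGraph V) [DecidableRel G.Adj]
    (k : ℕ) (hk : 1 ≤ k)
    (n : ℕ) (hn : n = (Fintype.card V) ^ 2 + G.edgeFinset.card)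
    (β : V → ℝ) (hβ : ∀ v, β v ∈ Set.Icc (0 : ℝ) 1)
    (Eβ : Finset (Sym2 V))
    (hEβ : Eβ = G.edgeFinset.filter (fun e => ∀ v ∈ e, (0.5 : ℝ) ≤ β v)) :
    (1 / (n : ℝ)) *
        (((Fintype.card V) ^ 2 : ℝ) * reward (k : ℝ) 0 (∑ v, β v) +
          ∑ e ∈ G.edgeFinset,
            reward 2 1.5 (Sym2.lift ⟨fun a b => β a + β b, fun a b => by ring⟩ e)) ≤
      (1 / (n : ℝ)) *
        ((k : ℝ) * ((Fintype.card V) ^ 2 : ℝ) + 1.5 * (G.edgeFinset.card : ℝ) +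
          0.5 * (Eβ.card : ℝ)) := by
  have hedge : ∀ e ∈ G.edgeFinset,
      reward 2 1.5 (Sym2.lift ⟨fun a b => β a + β b, fun a b => by ring⟩ e) ≤
        1.5 + 0.5 * (if ∀ v ∈ e, (0.5 : ℝ) ≤ β v then 1 else 0) := by
    intro e _
    induction e using Sym2.ind with
    | _ a b => simpa using reward_edge_le (hβ a).2 (hβ b).2
  have hsum := Finset.sum_le_sum hedge
  rw [Finset.sum_add_distrib, ← Finset.mul_sum, Finset.sum_boole, Finset.sum_const,
    nsmul_eq_mul, mul_comm (_ : ℝ) (1.5 : ℝ), ← hEβ] at hsum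
  have hall := mul_le_mul_of_nonneg_left
    (reward_le (v := ∑ v, β v) (Nat.cast_nonneg (α := ℝ) k) (Nat.cast_nonneg k)) (sq_nonneg (Fintype.card V : ℝ))
  refine mul_le_mul_of_nonneg_left ?_ (by positivity)
  linarith
end

section
/- Let k be a positive even integer and let H be a finite simple graph with at most 2k vertices, with edge set E_H. Then there exists a vertex subset S of H with |S| ≤ k such that the number of edges of H with both endpoints in S is at least |E_H|/8. -/
open Finset
open scoped Classical

/-- A finite type with at most `n * m` elements can be coloured with `n` colours so that each
colour is used at most `m` times. -/
theorem exists_coloring_card_fiber_le {V : Type*} [Fintype V] {n m : ℕ}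
    (hV : Fintype.card V ≤ n * m) :
    ∃ c : V → Fin n, ∀ i, (univ.filter (fun v => c v = i)).card ≤ m := by
  obtain ⟨f⟩ : Nonempty (V ↪ Fin n × Fin m) :=
    Function.Embedding.nonempty_of_card_le (by simpa using hV)
  refine ⟨fun v => (f v).1, fun i => ?_⟩
  have h := card_le_card_of_injOn (s := univ.filter (fun v => (f v).1 = i)) (t := univ)
    (fun v => (f v).2) (fun _ _ => mem_univ _) (fun u hu v hv huv =>
      f.injective (Prod.ext (by simp_all) huv))
  simpa using h

/-- Pigeonhole covering step: if `k` is a positive even integer and `H` is a finite simple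
graph on at most `2k` vertices, then some vertex subset `S` with `|S| ≤ k` induces at least
`|E_H|/8` of the edges of `H`. -/
theorem exists_subset_inducing_eighth_of_edges {V : Type*} [Fintype V] [DecidableEq V]
    (H : SimpleGraph V) [DecidableRel H.Adj]
    (k : ℕ) (hk : 0 < k) (hkeven : Even k) (hV : Fintype.card V ≤ 2 * k) :
    ∃ S : Finset V, S.card ≤ k ∧
      (H.edgeFinset.card : ℝ) / 8 ≤
        ((H.edgeFinset.filter (fun e => ∀ v ∈ e, v ∈ S)).card : ℝ) := by
  obtain ⟨m, rfl⟩ := hkeven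
  obtain ⟨c, hc⟩ := exists_coloring_card_fiber_le (n := 4) (m := m) (hV.trans (by lia))
  let pairs : Finset (Finset (Fin 4)) := powersetCard 2 univ
  let S : Finset (Fin 4) → Finset V := fun P => univ.filter (fun v => c v ∈ P)
  let induced : Finset (Fin 4) → Finset (Sym2 V) :=
    fun P => H.edgeFinset.filter (fun e => ∀ v ∈ e, v ∈ S P)
  have hS : ∀ P ∈ pairs, (S P).card ≤ m + m := by
    intro P hP
    have hsub : S P ⊆ P.biUnion (fun i => univ.filter (fun v => c v = i)) := by
      intro v hv
      simpa [S] using hv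
    have hle := (card_le_card hsub).trans (card_biUnion_le_card_mul _ _ m fun i _ => hc i)
    rw [(mem_powersetCard.mp hP).2] at hle
    lia
  have hcover : H.edgeFinset ⊆ pairs.biUnion induced := by
    intro e he
    induction e with
    | h u v =>
      obtain ⟨P, hcard, hu, hv⟩ : ∃ P : Finset (Fin 4), P.card = 2 ∧ c u ∈ P ∧ c v ∈ P := by
        obtain ⟨P, hsub, -, hcard⟩ := exists_subsuperset_card_eq
          (subset_univ ({c u, c v} : Finset (Fin 4))) card_le_two (by simp : 2 ≤ _)
        exact ⟨P, hcard, hsub (by simp), hsub (by simp)⟩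
      refine mem_biUnion.mpr ⟨P, mem_powersetCard.mpr ⟨subset_univ _, hcard⟩, ?_⟩
      exact mem_filter.mpr ⟨he, by simp [S, hu, hv]⟩
  have hpairs : pairs.card = 6 := by
    simp [pairs, Nat.choose]
  obtain ⟨P, hP, hlarge⟩ : ∃ P ∈ pairs, H.edgeFinset.card ≤ 8 * (induced P).card := by
    have hsum : H.edgeFinset.card ≤ ∑ P ∈ pairs, (induced P).card :=
      (card_le_card hcover).trans card_biUnion_le
    refine exists_le_of_sum_le (card_pos.mp (by lia)) ?_
    rw [sum_const, hpairs, ← mul_sum, smul_eq_mul]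
    lia
  refine ⟨S P, hS P hP, ?_⟩
  have hlarge' : (H.edgeFinset.card : ℝ) ≤ 8 * ((induced P).card : ℝ) := by
    exact_mod_cast hlarge
  change (H.edgeFinset.card : ℝ) / 8 ≤ ((induced P).card : ℝ)
  linarith
end
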